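/- Let X, Y ⊆ ω. There exists an embedding of pcas of B^X into G^Y if and only if X ⊕ X̄ is enumeration-reducible to Y, where X̄ is the complement of X. -/

import Mathlib

namespace PCAEmb

/-! ### Oracle computability -/

/-- Codes for partial functions computable relative to an oracle. -/
inductive OCode : Type
  | zero : OCode
  | succ : OCode
  | left : OCode
  | right : OCode
  | oracle : OCode
  | pair : OCode → OCode → OCode
  | comp : OCode → OCode → OCode
  | prec : OCode → OCode → OCode
  | rfind' : OCode → OCode

/-- Evaluation of an oracle code, relative to a (partial) oracle `O`. -/
def evalo (O : ℕ →. ℕ) : OCode → ℕ →. ℕ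
  | .zero => pure 0
  | .succ => Nat.succ
  | .left => ↑fun n : ℕ => n.unpair.1
  | .right => ↑fun n : ℕ => n.unpair.2
  | .oracle => O
  | .pair cf cg => fun n => Nat.pair <$> evalo O cf n <*> evalo O cg n
  | .comp cf cg => fun n => evalo O cg n >>= evalo O cf
  | .prec cf cg =>
      Nat.unpaired fun a n =>
        n.rec (evalo O cf a) fun y IH => do
          let i ← IH
          evalo O cg (Nat.pair a (Nat.pair y i))
  | .rfind' cf =>
      Nat.unpaired fun a m =>
        (Nat.rfind fun n => (fun x => x = 0) <$> evalo O cf (Nat.pair a (n + m))).map (· + m)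

/-- The standard numbering of oracle codes. -/
def OCode.ofNat : ℕ → OCode
  | 0 => .zero
  | 1 => .succ
  | 2 => .left
  | 3 => .right
  | 4 => .oracle
  | n + 5 =>
    match n % 4 with
    | 0 => .pair (OCode.ofNat (n / 4).unpair.1) (OCode.ofNat (n / 4).unpair.2)
    | 1 => .comp (OCode.ofNat (n / 4).unpair.1) (OCode.ofNat (n / 4).unpair.2)
    | 2 => .prec (OCode.ofNat (n / 4).unpair.1) (OCode.ofNat (n / 4).unpair.2)
    | _ => .rfind' (OCode.ofNat (n / 4).unpair.1)
  decreasing_by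
    all_goals
      have h1 := Nat.unpair_left_le (n / 4)
      have h2 := Nat.unpair_right_le (n / 4)
      have h3 := Nat.div_le_self n 4
      omega

/-- The `e`-th Turing functional with oracle `O` : `Φ_e^O`. -/
def phi (O : ℕ →. ℕ) (e : ℕ) : ℕ →. ℕ := evalo O (OCode.ofNat e)

/-- The characteristic function of a set of naturals, as a (total) partial function. -/
noncomputable def chi (X : Set ℕ) : ℕ →. ℕ :=
  fun n => Part.some (X.indicator (fun _ => 1) n)

/-- `ψ` is partial computable relative to the oracle `O`. -/
def RecursiveIn (O : ℕ →. ℕ) (ψ : ℕ →. ℕ) : Prop := ∃ c : OCode, evalo O c = ψ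

/-- Turing reducibility of sets of naturals. -/
def TuringLE (X Y : Set ℕ) : Prop := RecursiveIn (chi Y) (chi X)

/-- A total function `d : ℕ → ℕ` is `Y`-computable. -/
def ComputableIn (Y : Set ℕ) (d : ℕ → ℕ) : Prop :=
  RecursiveIn (chi Y) (fun n => Part.some (d n))

/-- A binary relation on `ℕ` is `Y`-c.e. -/
def CEIn (Y : Set ℕ) (R : ℕ → ℕ → Prop) : Prop :=
  ∃ c : OCode, ∀ n m, R n m ↔ (evalo (chi Y) c (Nat.pair n m)).Dom

/-- A set `W ⊆ ℕ` is `Y`-c.e. -/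
def CE1In (Y : Set ℕ) (W : Set ℕ) : Prop :=
  ∃ c : OCode, ∀ n, n ∈ W ↔ (evalo (chi Y) c n).Dom

/-- The canonical finite set `D_u` with code `u` (binary coding). -/
def Du (u : ℕ) : Set ℕ := {k | u.testBit k}

/-- Enumeration reducibility: `Z ≤ₑ Y`. -/
def EnumLE (Z Y : Set ℕ) : Prop :=
  ∃ W : Set ℕ, CE1In ∅ W ∧ ∀ x, x ∈ Z ↔ ∃ u, Nat.pair x u ∈ W ∧ Du u ⊆ Y

/-- The Turing jump `X'` of a set `X`. -/
def jump (X : Set ℕ) : Set ℕ := {e | (phi (chi X) e e).Dom}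

/-- The halting set `K = {e : φ_e(e)↓}`. -/
def Khalt : Set ℕ := jump ∅

/-! ### Partial combinatory algebras -/

/-- `k·a·b` as a partial element. -/
def app2 {α : Type*} (app : α → α → Part α) (a b c : α) : Part α :=
  (app a b).bind fun x => app x c

/-- `s·a·b·c` as a partial element. -/
def app3 {α : Type*} (app : α → α → Part α) (a b c d : α) : Part α :=
  (app2 app a b c).bind fun x => app x d

/-- A partial applicative structure is a pca if it has (distinct) combinators `s` and `k`. -/
def IsPCA {α : Type*} (app : α → α → Part α) : Prop :=
  ∃ s k : α, s ≠ k ∧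
    (∀ a b : α, app2 app k a b = Part.some a) ∧
    (∀ a b : α, (app2 app s a b).Dom) ∧
    (∀ a b c : α,
      app3 app s a b c = (app a c).bind fun x => (app b c).bind fun y => app x y)

/-- An embedding of partial combinatory algebras: an injection that preserves
(defined) application. -/
def IsPCAEmbedding {α β : Type*} (appA : α → α → Part α) (appB : β → β → Part β)
    (f : α → β) : Prop :=
  Function.Injective f ∧ ∀ a a' c : α, c ∈ appA a a' → f c ∈ appB (f a) (f a')

/-! ### Partial numberings -/

/-- `γ : ℕ ⇀ α` is a partial numbering (i.e. surjective). -/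
def IsNumbering {α : Type*} (γ : ℕ →. α) : Prop := ∀ a : α, ∃ n, a ∈ γ n

/-- `d` is an `(a⊥, a⊤)`-decider for `X` with respect to `γ`. -/
def IsDecider {α : Type*} (γ : ℕ →. α) (abot atop : α) (X : Set ℕ) (d : ℕ → ℕ) : Prop :=
  ∀ n, (n ∉ X → γ (d n) = Part.some abot) ∧ (n ∈ X → γ (d n) = Part.some atop)

/-- `γ` has `Y`-c.e. inequivalence. -/
def CEInequiv {α : Type*} (Y : Set ℕ) (γ : ℕ →. α) : Prop :=
  ∃ R : ℕ → ℕ → Prop, CEIn Y R ∧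
    ∀ n m, (γ n).Dom → (γ m).Dom → (R n m ↔ γ n ≠ γ m)

/-- `γ` is a `Y`-effectively pca-valued partial numbering: the application is
represented on codes by a partial `Y`-computable function `ψ`. -/
def EffValued {α : Type*} (Y : Set ℕ) (app : α → α → Part α) (γ : ℕ →. α) : Prop :=
  ∃ ψ : ℕ →. ℕ, RecursiveIn (chi Y) ψ ∧
    ∀ (n m : ℕ) (a b c : α), a ∈ γ n → b ∈ γ m → c ∈ app a b →
      ∃ j, j ∈ ψ (Nat.pair n m) ∧ c ∈ γ j

/-- `γ` is a strongly `Y`-effectively pca-valued partial numbering. -/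
def StrongEffValued {α : Type*} (Y : Set ℕ) (app : α → α → Part α) (γ : ℕ →. α) : Prop :=
  ∃ ψ : ℕ →. ℕ, RecursiveIn (chi Y) ψ ∧
    (∀ (n m : ℕ) (a b c : α), a ∈ γ n → b ∈ γ m → c ∈ app a b →
      ∃ j, j ∈ ψ (Nat.pair n m) ∧ c ∈ γ j) ∧
    (∀ (n m k l : ℕ) (a b a' b' c : α), a ∈ γ n → b ∈ γ m → a' ∈ γ k → b' ∈ γ l →
      c ∈ app a b → c ∈ app a' b' → ψ (Nat.pair n m) = ψ (Nat.pair k l))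

/-! ### The models -/

/-- Kleene's first model relativized to `X`: application `n · m = Φ_n^X(m)`. -/
noncomputable def k1App (X : Set ℕ) : ℕ → ℕ → Part ℕ := fun n m => phi (chi X) n m

/-- A total function as a partial function. -/
def toPFun (g : ℕ → ℕ) : ℕ →. ℕ := fun n => Part.some (g n)

/-- Join `f ⊕ g` of two partial functions. -/
def pjoin (f g : ℕ →. ℕ) : ℕ →. ℕ := fun n =>
  if n % 2 = 0 then f (n / 2) else g (n / 2)

/-- The totalization of a partial function, as a partial element of `ℕ → ℕ`:
defined iff `ψ` is total. -/
def partToTotal (ψ : ℕ →. ℕ) : Part (ℕ → ℕ) :=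
  ⟨∀ n, (ψ n).Dom, fun H n => (ψ n).get (H n)⟩

/-- Application in Kleene's second model `K₂`: `g · h = Φ^{g⊕h}_{g 0}`,
defined iff this function is total. -/
def k2App (g h : ℕ → ℕ) : Part (ℕ → ℕ) :=
  partToTotal (phi (pjoin (toPFun g) (toPFun h)) (g 0))

/-- Application in van Oosten's sequential model `B`: `θ · ρ = Φ^{θ⊕ρ}_{θ 0}`
(always defined, as a partial function). -/
def bApp (θ ρ : ℕ →. ℕ) : Part (ℕ →. ℕ) :=
  Part.some (fun n => (θ 0).bind fun e => phi (pjoin θ ρ) e n)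

/-- Restriction of a partial applicative structure to a subset. -/
def subApp {α : Type*} (app : α → α → Part α) (P : α → Prop)
    (a b : Subtype P) : Part (Subtype P) :=
  (app a.1 b.1).bind fun c => Part.assert (P c) fun h => Part.some ⟨c, h⟩

/-- Carrier of `K₂^X` : the total `X`-computable functions. -/
def K2el (X : Set ℕ) : Type := {g : ℕ → ℕ // RecursiveIn (chi X) (toPFun g)}

/-- Application in `K₂^X`. -/
def k2XApp (X : Set ℕ) : K2el X → K2el X → Part (K2el X) :=
  subApp k2App _

/-- Carrier of `B^X` : the partial `X`-computable functions. -/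
def Bel (X : Set ℕ) : Type := {θ : ℕ →. ℕ // RecursiveIn (chi X) θ}

/-- Application in `B^X`. -/
def bXApp (X : Set ℕ) : Bel X → Bel X → Part (Bel X) :=
  subApp bApp _

/-- Application in Scott's graph model `G`. -/
def gApp (A B : Set ℕ) : Part (Set ℕ) :=
  Part.some {n | ∃ u, Nat.pair n u ∈ A ∧ Du u ⊆ B}

/-- Carrier of `G^Z` : the sets enumeration-reducible to `Z`. -/
def Gel (Z : Set ℕ) : Type := {A : Set ℕ // EnumLE A Z}

/-- Application in `G^Z`. -/
def gXApp (Z : Set ℕ) : Gel Z → Gel Z → Part (Gel Z) :=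
  subApp gApp _

/-- `X ⊕ X̄ = {2n : n ∈ X} ∪ {2n+1 : n ∉ X}`. -/
def joinCompl (X : Set ℕ) : Set ℕ :=
  {k | ∃ n, (k = 2 * n ∧ n ∈ X) ∨ (k = 2 * n + 1 ∧ n ∉ X)}

/-! ### The λ-calculus -/

/-- Untyped λ-terms (de Bruijn representation). -/
inductive Lam : Type
  | var : ℕ → Lam
  | app : Lam → Lam → Lam
  | abs : Lam → Lam

/-- Lift (shift up) the free variables `≥ d` of a term. -/
def Lam.lift : Lam → ℕ → Lam
  | .var n, d => if n < d then .var n else .var (n + 1)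
  | .app M N, d => .app (M.lift d) (N.lift d)
  | .abs M, d => .abs (M.lift (d + 1))

/-- Substitution `M[k := N]` (de Bruijn). -/
def Lam.subst : Lam → ℕ → Lam → Lam
  | .var n, k, N => if n = k then N else if k < n then .var (n - 1) else .var n
  | .app M M', k, N => .app (M.subst k N) (M'.subst k N)
  | .abs M, k, N => .abs (M.subst (k + 1) (N.lift 0))

/-- β-equivalence of λ-terms. -/
inductive BetaEq : Lam → Lam → Prop
  | beta (M N : Lam) : BetaEq (.app (.abs M) N) (M.subst 0 N)
  | refl (M : Lam) : BetaEq M M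
  | symm {M N : Lam} : BetaEq M N → BetaEq N M
  | trans {M N P : Lam} : BetaEq M N → BetaEq N P → BetaEq M P
  | appCongr {M M' N N' : Lam} :
      BetaEq M M' → BetaEq N N' → BetaEq (.app M N) (.app M' N')
  | absCongr {M M' : Lam} : BetaEq M M' → BetaEq (.abs M) (.abs M')

/-- βη-equivalence of λ-terms. -/
inductive BetaEtaEq : Lam → Lam → Prop
  | beta (M N : Lam) : BetaEtaEq (.app (.abs M) N) (M.subst 0 N)
  | eta (M : Lam) : BetaEtaEq (.abs (.app (M.lift 0) (.var 0))) M
  | refl (M : Lam) : BetaEtaEq M M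
  | symm {M N : Lam} : BetaEtaEq M N → BetaEtaEq N M
  | trans {M N P : Lam} : BetaEtaEq M N → BetaEtaEq N P → BetaEtaEq M P
  | appCongr {M M' N N' : Lam} :
      BetaEtaEq M M' → BetaEtaEq N N' → BetaEtaEq (.app M N) (.app M' N')
  | absCongr {M M' : Lam} : BetaEtaEq M M' → BetaEtaEq (.abs M) (.abs M')

def lamBetaSetoid : Setoid Lam := ⟨BetaEq, ⟨BetaEq.refl, BetaEq.symm, BetaEq.trans⟩⟩

def lamBetaEtaSetoid : Setoid Lam :=
  ⟨BetaEtaEq, ⟨BetaEtaEq.refl, BetaEtaEq.symm, BetaEtaEq.trans⟩⟩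

/-- The pca `λ` of λ-terms modulo β-equivalence. -/
def LamBeta : Type := Quotient lamBetaSetoid

/-- The pca `λη` of λ-terms modulo βη-equivalence. -/
def LamBetaEta : Type := Quotient lamBetaEtaSetoid

/-- Application in `λ` (total). -/
def lamBetaApp : LamBeta → LamBeta → Part LamBeta := fun a b =>
  Part.some (Quotient.map₂ Lam.app (fun _ _ h1 _ _ h2 => BetaEq.appCongr h1 h2) a b)

/-- Application in `λη` (total). -/
def lamBetaEtaApp : LamBetaEta → LamBetaEta → Part LamBetaEta := fun a b =>
  Part.some (Quotient.map₂ Lam.app (fun _ _ h1 _ _ h2 => BetaEtaEq.appCongr h1 h2) a b)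

/-! Suppose `f` embeds `B^X` into `G^Y`. The successor function is represented on the numerals of
`B^X`, and application in `G` is an enumeration operator, so the images of all numerals are
enumerable from `Y`, uniformly. By injectivity some `p` belongs to the image of a numeral `a` but
not to that of a numeral `b`. If `Z` is `X`-computable, some element of `B^X` sends the numerals of
members of `Z` to `a` and those of non-members to `b`; hence `n ∈ Z` iff `p` belongs to the image of
this element applied to the numeral `n`, which makes `Z` enumerable from `Y`. Take `Z` to be
`X` and its complement.

Conversely, the embedding sends `θ` to its graph together with all `⟨n, u⟩` such that `n` belongs to
the image of `θ · ρ`, where `ρ` is the finite function with code `u`. It preserves application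
because `n` belonging to the image of `θ · ρ` depends only on a finite part of `ρ`. The image of an
`X`-computable `θ` is enumerable from the graph of the characteristic function of `X`, that is, from
`X ⊕ X̄`: a finite part of that oracle can be built into a program, and the image of the function
computed by a program is computably enumerable. -/

section Coding

theorem mem_Du {u k : ℕ} : k ∈ Du u ↔ k ∈ u.bitIndices :=
  Nat.mem_bitIndices.symm

theorem Du_subset_iff {u : ℕ} {A : Set ℕ} : Du u ⊆ A ↔ ∀ k ∈ u.bitIndices, k ∈ A := by
  simp only [← mem_Du, Set.subset_def]

theorem Du_one : Du 1 = {0} := by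
  ext k
  simp [mem_Du]

theorem exists_Du_eq (l : List ℕ) : ∃ u, Du u = {k | k ∈ l} := by
  refine ⟨∑ k ∈ l.toFinset, 2 ^ k, Set.ext fun k => ?_⟩
  rw [mem_Du, ← List.mem_toFinset, Finset.toFinset_bitIndices_sum_two_pow, List.mem_toFinset,
    Set.mem_ofPred_eq]

theorem primrecRel_testBit : PrimrecRel fun u k : ℕ => u.testBit k = true := by
  have pow : Primrec₂ fun a b : ℕ => a ^ b := Primrec₂.unpaired'.1 Nat.Primrec.pow
  have bit : Primrec₂ fun u k : ℕ => u / 2 ^ k % 2 :=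
    Primrec.nat_mod.comp₂
      (Primrec.nat_div.comp₂ Primrec₂.left (pow.comp₂ (Primrec₂.const 2) Primrec₂.right))
      (Primrec₂.const 2)
  exact (Primrec.eq.comp₂ bit (Primrec₂.const 1)).of_eq fun u k => by
    simp [Nat.testBit_eq_decide_div_mod_eq]

theorem primrec_bitIndices : Primrec Nat.bitIndices := by
  refine ((PrimrecRel.listFilter primrecRel_testBit.swap).comp Primrec.list_range
    Primrec.id).of_eq fun u => ?_
  refine ((List.sortedLT_range u).pairwise.filter _).eq_of_mem_iff
    Nat.bitIndices_sorted.pairwise fun k => ?_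
  simp only [List.mem_filter, List.mem_range, Function.swap, id, decide_eq_true_eq,
    Nat.mem_bitIndices, and_iff_right_iff_imp]
  exact fun h => Nat.lt_two_pow_self.trans_le (Nat.ge_two_pow_of_testBit h)

end Coding

section EnumPred

variable {α β : Type} [Primcodable α] [Primcodable β] {Y : Set ℕ} {P Q : α → Prop}

/-- Relative enumerability: membership in `P` has finite certificates that can be recognised
primitive recursively, up to finitely many positive questions `k ∈ Y`. This is enumeration
reducibility to `Y` for predicates on an arbitrary `Primcodable` type; the type of certificates
is left free so that closure properties only have to combine certificates. -/
def EnumPred (Y : Set ℕ) (P : α → Prop) : Prop :=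
  ∃ (ι : Type) (_ : Primcodable ι) (R : α → ι → Prop) (s : ι → List ℕ),
    PrimrecRel R ∧ Primrec s ∧ ∀ a, P a ↔ ∃ i, R a i ∧ ∀ k ∈ s i, k ∈ Y

theorem EnumPred.of_iff (h : EnumPred Y Q) (H : ∀ a, P a ↔ Q a) : EnumPred Y P := by
  rwa [show P = Q from funext fun a => propext (H a)]

theorem EnumPred.of_primrecPred (h : PrimrecPred P) : EnumPred Y P :=
  ⟨Unit, inferInstance, fun a _ => P a, fun _ => [], h.comp Primrec.fst, Primrec.const _,
    fun a => by simp⟩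

theorem EnumPred.of_rePred (h : REPred P) : EnumPred Y P := by
  obtain ⟨c, hc⟩ := Nat.Partrec.Code.exists_code.1 h
  refine ⟨ℕ, inferInstance, fun a t => (c.evaln t (Encodable.encode a)).isSome, fun _ => [],
    Primrec.eq.comp₂ (Primrec.option_isSome.comp (Nat.Partrec.Code.primrec_evaln.comp
      ((Primrec.snd.pair (Primrec.const c)).pair (Primrec.encode.comp Primrec.fst))))
      (Primrec₂.const true), Primrec.const _, fun a => ?_⟩
  have dom : (c.eval (Encodable.encode a)).Dom ↔ P a := by simp [hc, Part.assert]
  simp only [← dom, Part.dom_iff_mem, Nat.Partrec.Code.evaln_complete, Option.isSome_iff_exists,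
    Option.mem_def, List.not_mem_nil, false_imp_iff, implies_true, and_true]
  exact exists_comm

theorem EnumPred.mem_self : EnumPred Y (· ∈ Y) :=
  ⟨ℕ, inferInstance, fun k i => k = i, fun i => [i], Primrec.eq,
    Primrec.list_cons.comp Primrec.id (Primrec.const []), fun k => by simp⟩

theorem EnumPred.comp {P : β → Prop} (h : EnumPred Y P) {f : α → β} (hf : Primrec f) :
    EnumPred Y fun a => P (f a) := by
  obtain ⟨ι, _, R, s, hR, hs, h⟩ := h
  exact ⟨ι, inferInstance, fun a i => R (f a) i, s, hR.comp (hf.comp Primrec.fst) Primrec.snd, hs,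
    fun a => h (f a)⟩

theorem EnumPred.and (hP : EnumPred Y P) (hQ : EnumPred Y Q) : EnumPred Y fun a => P a ∧ Q a := by
  obtain ⟨ι, _, R, s, hR, hs, hP⟩ := hP
  obtain ⟨κ, _, S, t, hS, ht, hQ⟩ := hQ
  refine ⟨ι × κ, inferInstance, fun a i => R a i.1 ∧ S a i.2, fun i => s i.1 ++ t i.2,
    (hR.comp₂ Primrec₂.left (Primrec.fst.comp₂ Primrec₂.right)).and
      (hS.comp₂ Primrec₂.left (Primrec.snd.comp₂ Primrec₂.right)),
    Primrec.list_append.comp (hs.comp Primrec.fst) (ht.comp Primrec.snd), fun a => ?_⟩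
  simp only [hP, hQ, List.forall_mem_append, Prod.exists]
  exact ⟨fun ⟨⟨i, hi, hi'⟩, j, hj, hj'⟩ => ⟨i, j, ⟨hi, hj⟩, hi', hj'⟩,
    fun ⟨i, j, ⟨hi, hj⟩, hi', hj'⟩ => ⟨⟨i, hi, hi'⟩, j, hj, hj'⟩⟩

theorem EnumPred.exists {P : α → β → Prop} (h : EnumPred Y fun z : α × β => P z.1 z.2) :
    EnumPred Y fun a => ∃ b, P a b := by
  obtain ⟨ι, _, R, s, hR, hs, h⟩ := h
  refine ⟨β × ι, inferInstance, fun a i => R (a, i.1) i.2, fun i => s i.2,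
    hR.comp (Primrec.fst.pair (Primrec.fst.comp Primrec.snd)) (Primrec.snd.comp Primrec.snd),
    hs.comp Primrec.snd, fun a => ?_⟩
  simp only [fun b => h (a, b), Prod.exists]

theorem EnumPred.or (hP : EnumPred Y P) (hQ : EnumPred Y Q) : EnumPred Y fun a => P a ∨ Q a := by
  classical
  obtain ⟨ι, _, R, s, hR, hs, hP⟩ := hP
  obtain ⟨κ, _, S, t, hS, ht, hQ⟩ := hQ
  refine ⟨ι ⊕ κ, inferInstance, fun a => Sum.elim (R a) (S a), Sum.elim s t, ?_, ?_, fun a => ?_⟩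
  · have dec : Primrec fun z : α × (ι ⊕ κ) =>
        (Sum.casesOn z.2 (fun i => decide (R z.1 i)) fun j => decide (S z.1 j) : Bool) :=
      Primrec.sumCasesOn Primrec.snd
        (hR.decide.comp₂ (Primrec.fst.comp₂ Primrec₂.left) Primrec₂.right)
        (hS.decide.comp₂ (Primrec.fst.comp₂ Primrec₂.left) Primrec₂.right)
    exact (Primrec.eq.comp dec (Primrec.const true)).of_eq fun ⟨a, i⟩ => by cases i <;> simp
  · exact (Primrec.sumCasesOn Primrec.id (hs.comp₂ Primrec₂.right) (ht.comp₂ Primrec₂.right)).of_eq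
      fun i => by cases i <;> rfl
  · simp only [hP, hQ, Sum.exists, Sum.elim_inl, Sum.elim_inr]

theorem EnumPred.forall_mem (h : EnumPred Y P) : EnumPred Y fun l : List α => ∀ a ∈ l, P a := by
  obtain ⟨ι, _, R, s, hR, hs, h⟩ := h
  have hR' : PrimrecPred fun L : List (α × ι) => ∀ p ∈ L, R p.1 p.2 :=
    PrimrecPred.forall_mem_list hR
  refine ⟨List (α × ι), inferInstance, fun l L => L.map Prod.fst = l ∧ ∀ p ∈ L, R p.1 p.2,
    fun L => L.flatMap fun p => s p.2,
    (Primrec.eq.comp (Primrec.list_map Primrec.snd (Primrec.fst.comp₂ Primrec₂.right))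
      Primrec.fst).and (hR'.comp Primrec.snd),
    Primrec.list_flatMap Primrec.id (hs.comp (Primrec.snd.comp Primrec.snd)).to₂, fun l => ?_⟩
  constructor
  · intro hl
    choose i hi using fun a : {a // a ∈ l} => (h a).1 (hl a a.2)
    refine ⟨l.attach.map fun a => (a.1, i a), ⟨by simp [Function.comp_def], ?_⟩, ?_⟩
    · exact List.forall_mem_map.2 fun a _ => (hi a).1
    · simpa [List.flatMap_map] using fun k a ha => (hi ⟨a, ha⟩).2 k
  · rintro ⟨L, ⟨rfl, hL⟩, hY⟩ a ha
    obtain ⟨p, hp, rfl⟩ := List.mem_map.1 ha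
    exact (h _).2 ⟨p.2, hL p hp, fun k hk => hY k (List.mem_flatMap.2 ⟨p, hp, hk⟩)⟩

end EnumPred

section WellFounded

variable {α : Type}

/-- `L` is a finite derivation table for the rules `Q` (conclusion `a`, premises `l`): every entry
follows by a rule from other entries. -/
def IsTable (Q : α → List α → Prop) (L : List α) : Prop :=
  ∀ a ∈ L, ∃ l, Q a l ∧ ∀ b ∈ l, b ∈ L

theorem exists_isTable_of_forall_mem {Q : α → List α → Prop} (l : List α)
    (h : ∀ a ∈ l, ∃ L, IsTable Q L ∧ a ∈ L) : ∃ L, IsTable Q L ∧ ∀ a ∈ l, a ∈ L := by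
  choose L hL hmem using fun a : {a // a ∈ l} => h a a.2
  refine ⟨l.attach.flatMap L, fun a ha => ?_, fun a ha =>
    List.mem_flatMap.2 ⟨⟨a, ha⟩, List.mem_attach _ _, hmem _⟩⟩
  obtain ⟨c, hc, hac⟩ := List.mem_flatMap.1 ha
  obtain ⟨l', hQ, hl'⟩ := hL c a hac
  exact ⟨l', hQ, fun b hb => List.mem_flatMap.2 ⟨c, hc, hl' b hb⟩⟩

theorem iff_exists_isTable {Q : α → List α → Prop} {P : α → Prop} (m : α → ℕ)
    (hm : ∀ a l, Q a l → ∀ b ∈ l, m b < m a) (hP : ∀ a, P a ↔ ∃ l, Q a l ∧ ∀ b ∈ l, P b) (a : α) :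
    P a ↔ ∃ L, IsTable Q L ∧ a ∈ L := by
  induction h : m a using Nat.strong_induction_on generalizing a with
  | _ n ih =>
    subst h
    rw [hP]
    constructor
    · rintro ⟨l, hQ, hl⟩
      obtain ⟨L, hL, hmem⟩ := exists_isTable_of_forall_mem l fun b hb =>
        (ih _ (hm a l hQ b hb) b rfl).1 (hl b hb)
      refine ⟨a :: L, fun c hc => ?_, List.mem_cons_self⟩
      rcases List.mem_cons.1 hc with rfl | hc
      · exact ⟨l, hQ, fun b hb => List.mem_cons_of_mem _ (hmem b hb)⟩
      · obtain ⟨l', hQ', hl'⟩ := hL c hc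
        exact ⟨l', hQ', fun b hb => List.mem_cons_of_mem _ (hl' b hb)⟩
    · rintro ⟨L, hL, ha⟩
      obtain ⟨l, hQ, hl⟩ := hL a ha
      exact ⟨l, hQ, fun b hb => (ih _ (hm a l hQ b hb) b rfl).2 ⟨L, hL, hl b hb⟩⟩

variable [Primcodable α]

theorem primrecRel_mem_list : PrimrecRel fun (a : α) (l : List α) => a ∈ l :=
  (PrimrecRel.exists_mem_list Primrec.eq).swap.of_eq fun a l => by simp [Function.swap]

theorem EnumPred.of_recursion {Y : Set ℕ} {Q : α → List α → Prop} {P : α → Prop}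
    (hQ : EnumPred Y fun z : α × List α => Q z.1 z.2) (m : α → ℕ)
    (hm : ∀ a l, Q a l → ∀ b ∈ l, m b < m a) (hP : ∀ a, P a ↔ ∃ l, Q a l ∧ ∀ b ∈ l, P b) :
    EnumPred Y P := by
  have sub : PrimrecRel fun l L : List α => ∀ b ∈ l, b ∈ L :=
    PrimrecRel.forall_mem_list primrecRel_mem_list
  have entry : EnumPred Y fun z : List α × α => ∃ l, Q z.2 l ∧ ∀ b ∈ l, b ∈ z.1 :=
    .exists ((hQ.comp ((Primrec.snd.comp Primrec.fst).pair Primrec.snd)).and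
      (.of_primrecPred (sub.comp Primrec.snd (Primrec.fst.comp Primrec.fst))))
  have table : EnumPred Y fun L => IsTable Q L :=
    (entry.forall_mem.comp (Primrec.list_map Primrec.id Primrec₂.pair)).of_iff fun L => by
      simp [IsTable]
  exact .of_iff (.exists ((table.comp Primrec.snd).and (.of_primrecPred primrecRel_mem_list)))
    (iff_exists_isTable m hm hP)

end WellFounded

section Codes

open Nat.Partrec (Code)

/-- Replaces the oracle by an oracle-free program computing it. -/
def OCode.subst (o : Code) : OCode → Code
  | .zero => .zero
  | .succ => .succ
  | .left => .left
  | .right => .right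
  | .oracle => o
  | .pair c d => .pair (c.subst o) (d.subst o)
  | .comp c d => .comp (c.subst o) (d.subst o)
  | .prec c d => .prec (c.subst o) (d.subst o)
  | .rfind' c => .rfind' (c.subst o)

theorem eval_subst (o : Code) (c : OCode) : (c.subst o).eval = evalo o.eval c := by
  induction c with
  | zero | succ | left | right | oracle => rfl
  | pair c d ihc ihd | comp c d ihc ihd | prec c d ihc ihd =>
    simp only [OCode.subst, Code.eval, evalo, ihc, ihd]
    rfl
  | rfind' c ihc =>
    simp only [OCode.subst, Code.eval, evalo, ihc]
    rfl

/-- An oracle-free program as an oracle program. -/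
def OCode.ofCode : Code → OCode
  | .zero => .zero
  | .succ => .succ
  | .left => .left
  | .right => .right
  | .pair c d => .pair (ofCode c) (ofCode d)
  | .comp c d => .comp (ofCode c) (ofCode d)
  | .prec c d => .prec (ofCode c) (ofCode d)
  | .rfind' c => .rfind' (ofCode c)

theorem evalo_ofCode (O : ℕ →. ℕ) (c : Code) : evalo O (.ofCode c) = c.eval := by
  induction c with
  | zero | succ | left | right => rfl
  | pair c d ihc ihd | comp c d ihc ihd | prec c d ihc ihd =>
    simp only [OCode.ofCode, Code.eval, evalo, ihc, ihd]
    rfl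
  | rfind' c ihc =>
    simp only [OCode.ofCode, Code.eval, evalo, ihc]
    rfl

theorem exists_evalo_eq {f : ℕ →. ℕ} (hf : Partrec f) : ∃ c : OCode, ∀ O, evalo O c = f := by
  obtain ⟨c, rfl⟩ := Code.exists_code.1 (Partrec.nat_iff.1 hf)
  exact ⟨.ofCode c, fun O => evalo_ofCode O c⟩

theorem partrec_evalo_chi_empty (c : OCode) : Partrec (evalo (chi ∅) c) := by
  have : chi ∅ = Code.eval .zero := by
    funext n
    exact congrArg Part.some (congrFun (Set.indicator_empty _) n)
  rw [this, ← eval_subst]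
  exact Partrec.nat_iff.2 (Code.exists_code.2 ⟨_, rfl⟩)

theorem ofNat_add_five (n : ℕ) : OCode.ofNat (n + 5) =
    let c := OCode.ofNat (n / 4).unpair.1
    let d := OCode.ofNat (n / 4).unpair.2
    match n % 4 with
    | 0 => .pair c d
    | 1 => .comp c d
    | 2 => .prec c d
    | _ => .rfind' c := by
  rw [OCode.ofNat]

theorem exists_ofNat_eq (c : OCode) : ∃ e, OCode.ofNat e = c := by
  have key (a b i : ℕ) (hi : i < 4) :
      (4 * Nat.pair a b + i) / 4 = Nat.pair a b ∧ (4 * Nat.pair a b + i) % 4 = i := by omega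
  induction c with
  | zero => exact ⟨0, by simp [OCode.ofNat]⟩
  | succ => exact ⟨1, by simp [OCode.ofNat]⟩
  | left => exact ⟨2, by simp [OCode.ofNat]⟩
  | right => exact ⟨3, by simp [OCode.ofNat]⟩
  | oracle => exact ⟨4, by simp [OCode.ofNat]⟩
  | pair c d ihc ihd =>
    obtain ⟨⟨a, rfl⟩, b, rfl⟩ := And.intro ihc ihd
    exact ⟨4 * Nat.pair a b + 5, by simp [ofNat_add_five]⟩
  | comp c d ihc ihd =>
    obtain ⟨⟨a, rfl⟩, b, rfl⟩ := And.intro ihc ihd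
    exact ⟨4 * Nat.pair a b + 1 + 5, by simp [ofNat_add_five, key a b 1 (by simp)]⟩
  | prec c d ihc ihd =>
    obtain ⟨⟨a, rfl⟩, b, rfl⟩ := And.intro ihc ihd
    exact ⟨4 * Nat.pair a b + 2 + 5, by simp [ofNat_add_five, key a b 2 (by simp)]⟩
  | rfind' c ihc =>
    obtain ⟨a, rfl⟩ := ihc
    exact ⟨4 * Nat.pair a 0 + 3 + 5, by simp [ofNat_add_five, key a 0 3 (by simp)]⟩

/-- One step of the course-of-values recursion computing `e ↦ (OCode.ofNat e).subst o`:
`L` lists the values at all indices below `L.length`. -/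
def substStep (o : Code) (L : List Code) : Code :=
  let n := L.length
  let c := L.getD ((n - 5) / 4).unpair.1 .zero
  let d := L.getD ((n - 5) / 4).unpair.2 .zero
  [.zero, .succ, .left, .right, o, .pair c d, .comp c d, .prec c d, .rfind' c].getD
    (if n < 5 then n else 5 + (n - 5) % 4) .zero

theorem primrec_substStep : Primrec₂ substStep := by
  have n : Primrec fun z : Code × List Code => z.2.length := Primrec.list_length.comp Primrec.snd
  have n5 : Primrec fun z : Code × List Code => z.2.length - 5 :=
    Primrec.nat_sub.comp n (Primrec.const 5)
  have q : Primrec fun z : Code × List Code => ((z.2.length - 5) / 4).unpair :=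
    Primrec.unpair.comp (Primrec.nat_div.comp n5 (Primrec.const 4))
  have c := (Primrec.list_getD Code.zero).comp Primrec.snd (Primrec.fst.comp q)
  have d := (Primrec.list_getD Code.zero).comp Primrec.snd (Primrec.snd.comp q)
  have cons {f : Code × List Code → Code} {l : Code × List Code → List Code} (hf : Primrec f)
      (hl : Primrec l) : Primrec fun z => f z :: l z := Primrec.list_cons.comp hf hl
  refine (Primrec.list_getD Code.zero).comp (cons (Primrec.const _) <| cons (Primrec.const _) <|
    cons (Primrec.const _) <| cons (Primrec.const _) <| cons Primrec.fst <|
    cons (Code.primrec₂_pair.comp c d) <| cons (Code.primrec₂_comp.comp c d) <|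
    cons (Code.primrec₂_prec.comp c d) <| cons (Code.primrec_rfind'.comp c) (Primrec.const [])) ?_
  exact Primrec.ite (Primrec.nat_lt.comp n (Primrec.const 5)) n
    (Primrec.nat_add.comp (Primrec.const 5) (Primrec.nat_mod.comp n5 (Primrec.const 4)))

theorem substStep_map_range (o : Code) (e : ℕ) :
    substStep o ((List.range e).map fun i => (OCode.ofNat i).subst o) =
      (OCode.ofNat e).subst o := by
  match e with
  | 0 | 1 | 2 | 3 | 4 => simp [substStep, OCode.ofNat, OCode.subst]
  | n + 5 =>
    have lt1 : (n / 4).unpair.1 < n + 5 :=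
      ((Nat.unpair_left_le _).trans (Nat.div_le_self _ _)).trans_lt (by omega)
    have lt2 : (n / 4).unpair.2 < n + 5 :=
      ((Nat.unpair_right_le _).trans (Nat.div_le_self _ _)).trans_lt (by omega)
    have hn : n % 4 < 4 := Nat.mod_lt _ (by simp)
    rw [ofNat_add_five]
    interval_cases h : n % 4 <;> simp [substStep, OCode.subst, h, lt1, lt2]

theorem primrec_subst_ofNat : Primrec₂ fun (o : Code) e => (OCode.ofNat e).subst o :=
  Primrec.nat_strong_rec _ (Primrec.option_some.comp₂ primrec_substStep) fun o e =>
    congrArg some (substStep_map_range o e)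

theorem exists_primrec_code {α : Type} [Primcodable α] {f : α → ℕ →. ℕ} (hf : Partrec₂ f) :
    ∃ g : α → Code, Primrec g ∧ ∀ a, (g a).eval = f a := by
  have unc : Partrec fun n : ℕ =>
      (Encodable.decode (α := α) n.unpair.1 : Part α).bind fun a => f a n.unpair.2 :=
    (Computable.ofOption (Computable.decode.comp (Computable.fst.comp Computable.unpair))).bind
      (hf.comp Computable.snd (Computable.snd.comp (Computable.unpair.comp Computable.fst)))
  obtain ⟨c, hc⟩ := Code.exists_code.1 (Partrec.nat_iff.1 unc)
  exact ⟨fun a => c.curry (Encodable.encode a),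
    Code.primrec₂_curry.comp (Primrec.const c) Primrec.encode, fun a => by
      funext n
      simp [Code.eval_curry, hc]⟩

end Codes

section EnumLE

variable {α β : Type} [Primcodable α] [Primcodable β] {Y Z : Set ℕ}

theorem rePred_exists_of_primrecRel {R : α → β → Prop} (hR : PrimrecRel R) :
    REPred fun a => ∃ b, R a b := by
  classical
  have search : PrimrecRel fun (a : α) (n : ℕ) =>
      ∃ b ∈ (Encodable.decode (α := β) n).toList, R a b :=
    hR.swap.exists_mem_list.comp (Primrec.optionToList.comp (Primrec.decode.comp Primrec.snd))
      Primrec.fst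
  refine (Partrec.dom_re (Partrec.rfind search.decide.to_comp.partrec₂)).of_eq fun a => ?_
  simp only [Nat.rfind_dom]
  constructor
  · rintro ⟨n, hn, -⟩
    obtain ⟨b, -, hb⟩ := of_decide_eq_true (Part.mem_some_iff.1 hn).symm
    exact ⟨b, hb⟩
  · rintro ⟨b, hb⟩
    exact ⟨Encodable.encode b, by simpa using hb, fun _ => trivial⟩

theorem ce1In_empty_iff_rePred {W : Set ℕ} : CE1In ∅ W ↔ REPred (· ∈ W) := by
  constructor
  · rintro ⟨c, hc⟩
    exact (partrec_evalo_chi_empty c).dom_re.of_eq fun n => (hc n).symm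
  · intro h
    obtain ⟨c, hc⟩ := exists_evalo_eq (h.map (Computable.const 0).to₂)
    exact ⟨c, fun n => by simp [hc, Part.assert]⟩

theorem EnumPred.of_enumLE (h : EnumLE Z Y) : EnumPred Y (· ∈ Z) := by
  obtain ⟨W, hW, h⟩ := h
  have hW : EnumPred Y (· ∈ W) := .of_rePred (ce1In_empty_iff_rePred.1 hW)
  exact .of_iff (EnumPred.exists (P := fun x u => Nat.pair x u ∈ W ∧ ∀ k ∈ u.bitIndices, k ∈ Y)
    ((hW.comp Primrec₂.natPair).and
      (mem_self.forall_mem.comp (primrec_bitIndices.comp Primrec.snd)))) fun x => by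
    simp only [h, Du_subset_iff]

theorem EnumPred.enumLE (h : EnumPred Y (· ∈ Z)) : EnumLE Z Y := by
  obtain ⟨ι, _, R, s, hR, hs, h⟩ := h
  have hW : PrimrecRel fun (n : ℕ) (i : ι) =>
      R n.unpair.1 i ∧ ∀ k ∈ s i, k ∈ n.unpair.2.bitIndices := by
    have sub : PrimrecRel fun l L : List ℕ => ∀ k ∈ l, k ∈ L :=
      primrecRel_mem_list.forall_mem_list
    exact (hR.comp (Primrec.fst.comp (Primrec.unpair.comp Primrec.fst)) Primrec.snd).and
      (sub.comp (hs.comp Primrec.snd) (primrec_bitIndices.comp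
        (Primrec.snd.comp (Primrec.unpair.comp Primrec.fst))))
  refine ⟨{n | ∃ i, R n.unpair.1 i ∧ ∀ k ∈ s i, k ∈ n.unpair.2.bitIndices},
    ce1In_empty_iff_rePred.2 (rePred_exists_of_primrecRel hW), fun x => ?_⟩
  simp only [h, Set.mem_ofPred_eq, Nat.unpair_pair, ← mem_Du]
  constructor
  · rintro ⟨i, hi, hY⟩
    obtain ⟨u, hu⟩ := exists_Du_eq (s i)
    exact ⟨u, ⟨i, hi, fun k hk => hu ▸ hk⟩, hu ▸ hY⟩
  · rintro ⟨u, ⟨i, hi, hs⟩, hu⟩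
    exact ⟨i, hi, fun k hk => hu (hs k hk)⟩

theorem enumLE_iff_enumPred : EnumLE Z Y ↔ EnumPred Y (· ∈ Z) :=
  ⟨EnumPred.of_enumLE, EnumPred.enumLE⟩

theorem two_mul_mem_joinCompl {X : Set ℕ} {n : ℕ} : 2 * n ∈ joinCompl X ↔ n ∈ X := by
  simp only [joinCompl, Set.mem_ofPred_eq]
  constructor
  · rintro ⟨m, ⟨h, hm⟩ | ⟨h, -⟩⟩
    · rwa [show n = m by omega]
    · omega
  · exact fun h => ⟨n, .inl ⟨rfl, h⟩⟩

theorem two_mul_add_one_mem_joinCompl {X : Set ℕ} {n : ℕ} :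
    2 * n + 1 ∈ joinCompl X ↔ n ∉ X := by
  simp only [joinCompl, Set.mem_ofPred_eq]
  constructor
  · rintro ⟨m, ⟨h, -⟩ | ⟨h, hm⟩⟩
    · omega
    · rwa [show n = m by omega]
  · exact fun h => ⟨n, .inr ⟨rfl, h⟩⟩

theorem enumLE_joinCompl_iff {X : Set ℕ} :
    EnumLE (joinCompl X) Y ↔ EnumPred Y (· ∈ X) ∧ EnumPred Y (· ∉ X) := by
  rw [enumLE_iff_enumPred]
  constructor
  · exact fun h =>
      ⟨.of_iff (h.comp Primrec.nat_double) fun _ => two_mul_mem_joinCompl.symm,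
        .of_iff (h.comp Primrec.nat_double_succ) fun _ => two_mul_add_one_mem_joinCompl.symm⟩
  · rintro ⟨hX, hXc⟩
    have eq {f : ℕ → ℕ} (hf : Primrec f) : EnumPred Y fun z : ℕ × ℕ => z.1 = f z.2 :=
      .of_primrecPred (Primrec.eq.comp Primrec.fst (hf.comp Primrec.snd))
    exact .exists (((eq Primrec.nat_double).and (hX.comp Primrec.snd)).or
      ((eq Primrec.nat_double_succ).and (hXc.comp Primrec.snd)))

end EnumLE

section Continuity

open Topology

/-- The Scott topology of the flat domain `Part α`, generated by the sets `{o | a ∈ o}`. It serves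
to express the use principle: a computation consults only finitely much of its oracle. -/
instance partTopology (α : Type*) : TopologicalSpace (Part α) :=
  .generateFrom (Set.range fun a => {o | a ∈ o})

/-- The topology of pointwise convergence on partial functions, with the Scott topology on the
values. -/
instance pfunTopology (α β : Type*) : TopologicalSpace (α →. β) :=
  inferInstanceAs (TopologicalSpace (α → Part β))

variable {T α β : Type*} [TopologicalSpace T]

theorem continuous_part_iff {f : T → Part α} : Continuous f ↔ ∀ a, IsOpen {t | a ∈ f t} := by
  simp [continuous_generateFrom_iff]

theorem continuous_pfun_iff {F : T → α →. β} : Continuous F ↔ ∀ a, Continuous fun t => F t a :=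
  continuous_pi_iff

theorem continuous_bind {f : T → Part α} {g : T → α → Part β} (hf : Continuous f)
    (hg : ∀ a, Continuous fun t => g t a) : Continuous fun t => (f t).bind (g t) := by
  refine continuous_part_iff.2 fun b => ?_
  have : {t | b ∈ (f t).bind (g t)} = ⋃ a, {t | a ∈ f t} ∩ {t | b ∈ g t a} := by
    ext t
    simp
  rw [this]
  exact isOpen_iUnion fun a =>
    (continuous_part_iff.1 hf a).inter (continuous_part_iff.1 (hg a) b)

theorem continuous_map {f : T → Part α} (g : α → β) (hf : Continuous f) :
    Continuous fun t => (f t).map g := by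
  simp only [← Part.bind_some_eq_map]
  exact continuous_bind hf fun _ => continuous_const

theorem continuous_rfind {p : T → ℕ →. Bool} (hp : ∀ n, Continuous fun t => p t n) :
    Continuous fun t => Nat.rfind (p t) := by
  refine continuous_part_iff.2 fun n => ?_
  have : {t | n ∈ Nat.rfind (p t)} = {t | true ∈ p t n} ∩ ⋂ m ∈ Set.Iio n, {t | false ∈ p t m} := by
    ext t
    simp [Nat.mem_rfind]
  rw [this]
  exact (continuous_part_iff.1 (hp n) _).inter
    ((Set.finite_Iio n).isOpen_biInter fun m _ => continuous_part_iff.1 (hp m) _)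

theorem continuous_evalo (c : OCode) : Continuous fun O => evalo O c := by
  induction c with
  | zero | succ | left | right => exact continuous_const
  | oracle => exact continuous_id
  | pair c d ihc ihd =>
    refine continuous_pfun_iff.2 fun n => ?_
    exact continuous_bind (continuous_map _ (continuous_pfun_iff.1 ihc n)) fun f =>
      continuous_map f (continuous_pfun_iff.1 ihd n)
  | comp c d ihc ihd =>
    refine continuous_pfun_iff.2 fun n => ?_
    exact continuous_bind (continuous_pfun_iff.1 ihd n) (continuous_pfun_iff.1 ihc)
  | prec c d ihc ihd =>
    refine continuous_pfun_iff.2 fun n => ?_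
    simp only [evalo, Nat.unpaired]
    induction n.unpair.2 with
    | zero => exact continuous_pfun_iff.1 ihc _
    | succ y ih => exact continuous_bind ih fun _ => continuous_pfun_iff.1 ihd _
  | rfind' c ihc =>
    refine continuous_pfun_iff.2 fun n => ?_
    exact continuous_map _ (continuous_rfind fun k =>
      continuous_map _ (continuous_pfun_iff.1 ihc _))

theorem continuous_pjoin : Continuous fun O : (ℕ →. ℕ) × (ℕ →. ℕ) => pjoin O.1 O.2 := by
  refine continuous_pfun_iff.2 fun n => ?_
  simp only [pjoin]
  split_ifs
  · exact continuous_pfun_iff.1 continuous_fst _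
  · exact continuous_pfun_iff.1 continuous_snd _

/-- Application in van Oosten's model `B`, which is total, as an operation. -/
def seqApp (θ ρ : ℕ →. ℕ) : ℕ →. ℕ := fun n => (θ 0).bind fun e => phi (pjoin θ ρ) e n

theorem continuous_seqApp : Continuous fun z : (ℕ →. ℕ) × (ℕ →. ℕ) => seqApp z.1 z.2 := by
  refine continuous_pfun_iff.2 fun n => ?_
  exact continuous_bind (continuous_pfun_iff.1 continuous_fst 0) fun e =>
    continuous_pfun_iff.1 ((continuous_evalo _).comp continuous_pjoin) n

theorem mem_of_isOpen_of_extends {U : Set (α →. β)} (hU : IsOpen U) {θ ρ : α →. β}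
    (hθ : θ ∈ U) (h : ∀ a, ∀ b ∈ θ a, b ∈ ρ a) : ρ ∈ U := by
  have spec : ρ ⤳ θ := by
    refine specializes_pi.2 fun a => ?_
    rw [Specializes, TopologicalSpace.nhds_generateFrom (a := θ a)]
    refine le_iInf₂ fun V hV => Filter.le_principal_iff.2 ?_
    obtain ⟨hθV, b, rfl⟩ := hV
    exact (continuous_part_iff.1 continuous_id b).mem_nhds (h a b hθV)
  exact spec.mem_open hU hθ

end Continuity

section FiniteFunctions

/-- The code of the point `(x, y)` of a graph. The tag `1` separates these codes from the
numbers `⟨n, u⟩` standing for an application to the finite function `u`, see `embed`. -/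
def graphPt (x y : ℕ) : ℕ := Nat.pair (Nat.pair x y) 1

/-- The graph of a partial function, coded as a set of numbers. -/
def graphSet (ρ : ℕ →. ℕ) : Set ℕ := {n | ∃ x, ∃ y ∈ ρ x, graphPt x y = n}

/-- The finite partial function with graph `Du u`; if `Du u` is not single-valued, the least value
is taken. -/
def finFun (u : ℕ) : ℕ →. ℕ := fun x => Nat.rfind fun y => Part.some (u.testBit (graphPt x y))

variable {u x y x' y' : ℕ} {ρ : ℕ →. ℕ}

theorem graphPt_inj : graphPt x y = graphPt x' y' ↔ x = x' ∧ y = y' := by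
  simp [graphPt, Nat.pair_eq_pair]

theorem graphPt_mem_graphSet : graphPt x y ∈ graphSet ρ ↔ y ∈ ρ x := by
  simp [graphSet, graphPt_inj]

theorem mem_finFun : y ∈ finFun u x ↔ graphPt x y ∈ Du u ∧ ∀ m < y, graphPt x m ∉ Du u :=
  Nat.mem_rfind.trans (by simp [Du])

theorem mem_of_mem_finFun (hu : Du u ⊆ graphSet ρ) (h : y ∈ finFun u x) : y ∈ ρ x :=
  graphPt_mem_graphSet.1 (hu (mem_finFun.1 h).1)

theorem finFun_eq (h : ∀ y, graphPt x y ∈ Du u ↔ y ∈ ρ x) : finFun u x = ρ x := by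
  ext y
  simp only [mem_finFun, h]
  exact ⟨fun hy => hy.1, fun hy => ⟨hy, fun m hm hm' => hm.ne (Part.mem_unique hm' hy)⟩⟩

theorem exists_finFun_eqOn (ρ : ℕ →. ℕ) (I : Finset ℕ) :
    ∃ v, Du v ⊆ graphSet ρ ∧ ∀ x ∈ I, finFun v x = ρ x := by
  classical
  obtain ⟨v, hv⟩ :=
    exists_Du_eq (I.toList.flatMap fun x => (ρ x).toOption.toList.map (graphPt x))
  have mem_v (n : ℕ) : n ∈ Du v ↔ ∃ x ∈ I, ∃ y ∈ ρ x, graphPt x y = n := by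
    simp [hv]
  refine ⟨v, fun n hn => ?_, fun x hx => finFun_eq fun y => ?_⟩
  · obtain ⟨x, -, hx⟩ := (mem_v n).1 hn
    exact ⟨x, hx⟩
  · simp [mem_v, graphPt_inj, hx]

theorem mem_iff_exists_finFun_mem {U : Set (ℕ →. ℕ)} (hU : IsOpen U) :
    ρ ∈ U ↔ ∃ v, Du v ⊆ graphSet ρ ∧ finFun v ∈ U := by
  constructor
  · intro hρ
    obtain ⟨I, V, hV, hVU⟩ := isOpen_pi_iff.1 hU ρ hρ
    obtain ⟨v, hvρ, hv⟩ := exists_finFun_eqOn ρ I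
    exact ⟨v, hvρ, hVU fun x hx => hv x hx ▸ (hV x hx).2⟩
  · rintro ⟨v, hvρ, hv⟩
    exact mem_of_isOpen_of_extends hU hv fun x y => mem_of_mem_finFun hvρ

end FiniteFunctions

section Embedding

/-- The predicate `n ∈ embed θ`, by recursion on `n`. -/
def MemEmbed : (ℕ →. ℕ) → ℕ → Prop
  | _, 0 => False
  | θ, n + 1 =>
    let k := (n + 1).unpair.1
    let u := (n + 1).unpair.2
    if u = 1 then k.unpair.2 ∈ θ k.unpair.1 else MemEmbed (seqApp θ (finFun u)) k
  termination_by _ n => n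
  decreasing_by exact Nat.unpair_lt n.succ_pos

/-- The embedding of `B` into `G`: an element `θ` is sent to its graph together with all pairs
`⟨n, u⟩` for which `n` belongs to the image of the application of `θ` to the finite function `u`.
A pair `⟨n, 1⟩` codes a point of the graph. Reusing the index `1` for this is harmless, since
`Du 1 = {0}` is never contained in an image. -/
def embed (θ : ℕ →. ℕ) : Set ℕ := {n | MemEmbed θ n}

variable {θ ρ : ℕ →. ℕ} {n u x y : ℕ}

theorem zero_notMem_embed : 0 ∉ embed θ := by
  simp [embed, MemEmbed]

theorem mem_embed_iff (hn : n ≠ 0) : n ∈ embed θ ↔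
    if n.unpair.2 = 1 then n.unpair.1.unpair.2 ∈ θ n.unpair.1.unpair.1
      else n.unpair.1 ∈ embed (seqApp θ (finFun n.unpair.2)) := by
  obtain ⟨n, rfl⟩ := Nat.exists_eq_succ_of_ne_zero hn
  simp only [embed, Set.mem_ofPred_eq]
  rw [MemEmbed]

theorem graphPt_ne_zero : graphPt x y ≠ 0 := by
  change Nat.pair (Nat.pair x y) 1 ≠ Nat.pair 0 0
  simp [Nat.pair_eq_pair]

theorem graphPt_mem_embed : graphPt x y ∈ embed θ ↔ y ∈ θ x := by
  rw [mem_embed_iff graphPt_ne_zero]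
  simp [graphPt]

theorem pair_mem_embed (hu : u ≠ 1) :
    Nat.pair n u ∈ embed θ ↔ n ∈ embed (seqApp θ (finFun u)) := by
  by_cases h : Nat.pair n u = 0
  · obtain ⟨rfl, rfl⟩ : n = 0 ∧ u = 0 := Nat.pair_eq_pair.1 (h : _ = Nat.pair 0 0)
    simp only [h, zero_notMem_embed]
  · simp [mem_embed_iff h, hu]

theorem embed_injective : Function.Injective embed := fun θ ρ h => by
  ext x y
  rw [← graphPt_mem_embed, h, graphPt_mem_embed]

theorem isOpen_mem_embed (n : ℕ) : IsOpen {θ | n ∈ embed θ} := by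
  induction n using Nat.strong_induction_on with
  | _ n ih =>
    rcases eq_or_ne n 0 with rfl | hn
    · simp [zero_notMem_embed]
    · simp only [mem_embed_iff hn]
      split_ifs
      · exact continuous_part_iff.1 (continuous_pfun_iff.1 continuous_id _) _
      · exact (ih _ (Nat.unpair_lt (Nat.pos_of_ne_zero hn))).preimage
          (continuous_seqApp.comp (continuous_id.prodMk continuous_const))

theorem graphSet_subset_embed : graphSet ρ ⊆ embed ρ := by
  rintro - ⟨x, y, h, rfl⟩
  exact graphPt_mem_embed.2 h

/-- Application in Scott's graph model `G`, which is total, as an operation. -/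
def graphApp (A B : Set ℕ) : Set ℕ := {n | ∃ u, Nat.pair n u ∈ A ∧ Du u ⊆ B}

theorem embed_seqApp (θ ρ : ℕ →. ℕ) :
    embed (seqApp θ ρ) = graphApp (embed θ) (embed ρ) := by
  have ne_one {u : ℕ} (hu : Du u ⊆ embed ρ) : u ≠ 1 := by
    rintro rfl
    exact zero_notMem_embed (hu (by simp [Du_one]))
  have hopen (n : ℕ) : IsOpen {ρ | n ∈ embed (seqApp θ ρ)} :=
    (isOpen_mem_embed n).preimage (continuous_seqApp.comp (continuous_const.prodMk continuous_id))
  ext n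
  constructor
  · intro hn
    obtain ⟨u, huρ, hu⟩ := (mem_iff_exists_finFun_mem (hopen n)).1 hn
    have hu' := huρ.trans graphSet_subset_embed
    exact ⟨u, (pair_mem_embed (ne_one hu')).2 hu, hu'⟩
  · rintro ⟨u, hn, hu⟩
    rw [pair_mem_embed (ne_one hu)] at hn
    exact mem_of_isOpen_of_extends (hopen n) hn fun x y h =>
      graphPt_mem_embed.1 (hu (mem_finFun.1 h).1)

end Embedding

section EmbeddingComputable

open Nat.Partrec (Code)

theorem primrec_graphPt : Primrec₂ graphPt :=
  Primrec₂.natPair.comp₂ Primrec₂.natPair (Primrec₂.const 1)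

theorem partrec_finFun : Partrec₂ finFun := by
  have bit : Primrec fun z : (ℕ × ℕ) × ℕ => z.1.1.testBit (graphPt z.1.2 z.2) :=
    (primrecRel_testBit.decide.comp (Primrec.fst.comp Primrec.fst)
      (primrec_graphPt.comp (Primrec.snd.comp Primrec.fst) Primrec.snd)).of_eq fun _ => by simp
  exact Partrec.rfind bit.to_comp.partrec

theorem exists_primrec_code_pjoin_finFun : ∃ g : Code × ℕ → Code, Primrec g ∧
    ∀ z, (g z).eval = pjoin z.1.eval (finFun z.2) := by
  refine exists_primrec_code ?_
  have n : Primrec fun z : (Code × ℕ) × ℕ => z.2 := Primrec.snd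
  have half := (Primrec.nat_div.comp n (Primrec.const 2)).to_comp
  have even : Primrec fun z : (Code × ℕ) × ℕ => decide (z.2 % 2 = 0) :=
    Primrec.eq.decide.comp (Primrec.nat_mod.comp n (Primrec.const 2)) (Primrec.const 0)
  have evalHalf := Code.eval_part.comp (Primrec.fst.comp Primrec.fst).to_comp half
  have finHalf := partrec_finFun.comp (Primrec.snd.comp Primrec.fst).to_comp half
  exact (Partrec.cond even.to_comp evalHalf finHalf).of_eq fun z => by
    simp [pjoin, Bool.cond_decide]

theorem exists_primrec_code_seqApp_finFun : ∃ g : Code × ℕ → Code, Primrec g ∧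
    ∀ z, (g z).eval = seqApp z.1.eval (finFun z.2) := by
  obtain ⟨join, hjoin, eval_join⟩ := exists_primrec_code_pjoin_finFun
  refine exists_primrec_code ?_
  have index : Partrec fun z : (Code × ℕ) × ℕ => z.1.1.eval 0 :=
    Code.eval_part.comp (Primrec.fst.comp Primrec.fst).to_comp (Computable.const 0)
  have program : Primrec fun z : ((Code × ℕ) × ℕ) × ℕ => (OCode.ofNat z.2).subst (join z.1.1) :=
    primrec_subst_ofNat.comp (hjoin.comp (Primrec.fst.comp Primrec.fst)) Primrec.snd
  refine (index.bind (Code.eval_part.comp program.to_comp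
    (Computable.snd.comp Computable.fst)).to₂).of_eq fun z => ?_
  simp only [eval_subst, eval_join]
  rfl

variable {X Y : Set ℕ}

theorem enumPred_mem_eval : EnumPred Y fun z : (Code × ℕ) × ℕ => z.2 ∈ z.1.1.eval z.1.2 :=
  .of_iff (EnumPred.exists (P := fun z t => Code.evaln t z.1.1 z.1.2 = some z.2)
    (.of_primrecPred (Primrec.eq.comp
      (Code.primrec_evaln.comp ((Primrec.snd.pair (Primrec.fst.comp
        (Primrec.fst.comp Primrec.fst))).pair (Primrec.snd.comp (Primrec.fst.comp Primrec.fst))))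
      (Primrec.option_some.comp (Primrec.snd.comp Primrec.fst)))))
    fun _ => Code.evaln_complete

theorem enumPred_mem_embed_eval : EnumPred Y fun z : Code × ℕ => z.2 ∈ embed z.1.eval := by
  obtain ⟨app, happ, eval_app⟩ := exists_primrec_code_seqApp_finFun
  let Q (z : Code × ℕ) (l : List (Code × ℕ)) : Prop :=
    (z.2.unpair.2 = 1 ∧ z.2.unpair.1.unpair.2 ∈ z.1.eval z.2.unpair.1.unpair.1 ∧ l = []) ∨
      z.2 ≠ 0 ∧ z.2.unpair.2 ≠ 1 ∧ l = [(app (z.1, z.2.unpair.2), z.2.unpair.1)]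
  have hQ : EnumPred Y fun z : (Code × ℕ) × List (Code × ℕ) => Q z.1 z.2 := by
    have c : Primrec fun z : (Code × ℕ) × List (Code × ℕ) => z.1.1 := Primrec.fst.comp Primrec.fst
    have n : Primrec fun z : (Code × ℕ) × List (Code × ℕ) => z.1.2 := Primrec.snd.comp Primrec.fst
    have k := Primrec.fst.comp (Primrec.unpair.comp n)
    have u := Primrec.snd.comp (Primrec.unpair.comp n)
    have xy := Primrec.unpair.comp k
    have value := (enumPred_mem_eval (Y := Y)).comp
      ((c.pair (Primrec.fst.comp xy)).pair (Primrec.snd.comp xy))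
    have rest := Primrec.list_cons.comp ((happ.comp (c.pair u)).pair k) (Primrec.const [])
    refine .or (.and (.of_primrecPred ?_) (value.and (.of_primrecPred ?_)))
      (.and (.of_primrecPred ?_) (.and (.of_primrecPred ?_) (.of_primrecPred ?_)))
    · exact Primrec.eq.comp u (Primrec.const 1)
    · exact Primrec.eq.comp Primrec.snd (Primrec.const [])
    · exact (Primrec.eq.comp n (Primrec.const 0)).not
    · exact (Primrec.eq.comp u (Primrec.const 1)).not
    · exact Primrec.eq.comp Primrec.snd rest
  refine .of_recursion hQ Prod.snd ?_ ?_
  · rintro z l (⟨-, -, rfl⟩ | ⟨hz, -, rfl⟩)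
    · simp
    · simpa using Nat.unpair_lt (Nat.pos_of_ne_zero hz)
  · rintro ⟨c, n⟩
    rcases eq_or_ne n 0 with rfl | hn
    · simp [Q, zero_notMem_embed]
    · by_cases hu : n.unpair.2 = 1 <;> simp [Q, mem_embed_iff, hn, hu, eval_app]

theorem enumPred_mem_graphSet_chi (hX : EnumPred Y (· ∈ X)) (hXc : EnumPred Y (· ∉ X)) :
    EnumPred Y (· ∈ graphSet (chi X)) := by
  classical
  have value {i : ℕ} {P : ℕ → Prop} (hP : EnumPred Y P) :
      EnumPred Y fun z : ℕ × ℕ => P z.2 ∧ z.1 = graphPt z.2 i :=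
    (hP.comp Primrec.snd).and (.of_primrecPred (Primrec.eq.comp Primrec.fst
      (primrec_graphPt.comp Primrec.snd (Primrec.const i))))
  refine .of_iff (EnumPred.exists
    (P := fun n x => (x ∈ X ∧ n = graphPt x 1) ∨ (x ∉ X ∧ n = graphPt x 0))
    ((value hX).or (value hXc))) fun n => ?_
  refine exists_congr fun x => ?_
  by_cases hx : x ∈ X <;> simp [chi, hx, eq_comm]

theorem enumPred_mem_embed (hX : EnumPred Y (· ∈ X)) (hXc : EnumPred Y (· ∉ X)) {θ : ℕ →. ℕ}
    (hθ : RecursiveIn (chi X) θ) : EnumPred Y (· ∈ embed θ) := by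
  obtain ⟨d, rfl⟩ := hθ
  obtain ⟨e, rfl⟩ := exists_ofNat_eq d
  obtain ⟨g, hg, eval_g⟩ := exists_primrec_code partrec_finFun
  have use (n : ℕ) : n ∈ embed (evalo (chi X) (OCode.ofNat e)) ↔ ∃ v,
      (∀ k ∈ v.bitIndices, k ∈ graphSet (chi X)) ∧
        n ∈ embed ((OCode.ofNat e).subst (g v)).eval := by
    simp only [eval_subst, eval_g, ← Du_subset_iff]
    exact mem_iff_exists_finFun_mem ((isOpen_mem_embed n).preimage (continuous_evalo _))
  have program : Primrec fun v => (OCode.ofNat e).subst (g v) :=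
    primrec_subst_ofNat.comp hg (Primrec.const e)
  exact .of_iff (.exists (.and
    ((enumPred_mem_graphSet_chi hX hXc).forall_mem.comp (primrec_bitIndices.comp Primrec.snd))
    (enumPred_mem_embed_eval.comp ((program.comp Primrec.snd).pair Primrec.fst)))) use

end EmbeddingComputable

section Models

variable {X Y : Set ℕ}

theorem mem_subApp {α : Type*} {P : α → Prop} {app : α → α → Part α} {a b c : Subtype P} :
    c ∈ subApp app P a b ↔ c.1 ∈ app a.1 b.1 := by
  simp only [subApp, Part.mem_bind_iff, Part.mem_assert_iff, Part.mem_some_iff]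
  exact ⟨fun ⟨_, h, _, hc⟩ => hc ▸ h, fun h => ⟨c.1, h, c.2, rfl⟩⟩

theorem mem_bXApp {a b c : Bel X} : c ∈ bXApp X a b ↔ c.1 = seqApp a.1 b.1 :=
  mem_subApp.trans Part.mem_some_iff

theorem mem_gXApp {a b c : Gel Y} : c ∈ gXApp Y a b ↔ c.1 = graphApp a.1 b.1 :=
  mem_subApp.trans Part.mem_some_iff

/-- The numeral `n` of `B^X`: the constant function with value `n`. -/
def cst (X : Set ℕ) (n : ℕ) : Bel X :=
  ⟨toPFun fun _ => n, (exists_evalo_eq (Computable.const n).partrec).imp fun _ h => h _⟩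

theorem cst_injective (X : Set ℕ) : Function.Injective (cst X) := fun m n h => by
  simpa [cst, toPFun] using congrFun (congrArg Subtype.val h) 0

theorem evalo_comp {O : ℕ →. ℕ} {c d : OCode} {n m : ℕ} (h : evalo O d n = Part.some m) :
    evalo O (.comp c d) n = evalo O c m := by
  change (evalo O d n).bind (evalo O c) = _
  rw [h]
  exact Part.bind_some _ _

theorem recursiveIn_comp {O ψ : ℕ →. ℕ} (hψ : RecursiveIn O ψ) {g : ℕ → ℕ} (hg : Computable g) :
    RecursiveIn O fun n => (ψ n).map g := by
  obtain ⟨c, rfl⟩ := hψ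
  obtain ⟨d, hd⟩ := exists_evalo_eq hg.partrec
  refine ⟨.comp d c, funext fun n => ?_⟩
  simp only [evalo, hd]
  exact Part.bind_some_eq_map _ _

theorem recursiveIn_casesOn {O : ℕ →. ℕ} {g : ℕ → ℕ} (hg : RecursiveIn O (toPFun g)) (e : ℕ) :
    RecursiveIn O (toPFun fun n => n.casesOn e g) := by
  obtain ⟨c, hc⟩ := hg
  obtain ⟨const, hconst⟩ := exists_evalo_eq (Computable.const (α := ℕ) e).partrec
  obtain ⟨arg, harg⟩ := exists_evalo_eq
    (Primrec₂.natPair.comp (Primrec.const 0) Primrec.id).to_comp.partrec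
  obtain ⟨idx, hidx⟩ := exists_evalo_eq
    (Primrec.fst.comp (Primrec.unpair.comp (Primrec.snd.comp Primrec.unpair))).to_comp.partrec
  have value (n : ℕ) : evalo O (.prec const (.comp c idx)) (Nat.pair 0 n) =
      Part.some (n.casesOn e g) := by
    induction n with
    | zero => simp [evalo, hconst]
    | succ n ih =>
      have step : evalo O (.prec const (.comp c idx)) (Nat.pair 0 (n + 1)) =
          (evalo O (.prec const (.comp c idx)) (Nat.pair 0 n)).bind fun i =>
            evalo O (.comp c idx) (Nat.pair 0 (Nat.pair n i)) := by
        simp only [evalo, Nat.unpaired, Nat.unpair_pair]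
        rfl
      rw [step, ih, Part.bind_some, evalo_comp (m := n) (by simp [hidx]), hc]
      rfl
  exact ⟨.comp (.prec const (.comp c idx)) arg, funext fun n =>
    (evalo_comp (congrFun (harg O) n)).trans (value n)⟩

/-- A program `e` reads off the numeral `n` and looks up `g n`, which the representing element
stores at `n + 1`, since the place `0` is taken by `e`. -/
theorem exists_cst_mem_bXApp {g : ℕ → ℕ} (hg : RecursiveIn (chi X) (toPFun g)) :
    ∃ D : Bel X, ∀ n, cst X (g n) ∈ bXApp X D (cst X n) := by
  obtain ⟨one, hone⟩ := exists_evalo_eq (Computable.const (α := ℕ) 1).partrec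
  obtain ⟨dbl, hdbl⟩ := exists_evalo_eq (Primrec.nat_double.comp Primrec.succ).to_comp.partrec
  obtain ⟨e, he⟩ := exists_ofNat_eq (.comp .oracle (.comp dbl (.comp .oracle one)))
  refine ⟨⟨_, recursiveIn_casesOn hg e⟩, fun n => mem_bXApp.2 (funext fun m => ?_)⟩
  refine Eq.symm ((Part.bind_some e _).trans ?_)
  set O := pjoin (toPFun fun n => n.casesOn e g) (cst X n).1 with hO
  have numeral : evalo O (.comp .oracle one) m = Part.some n :=
    evalo_comp (congrFun (hone O) m)
  have place : evalo O (.comp dbl (.comp .oracle one)) m = Part.some (2 * (n + 1)) :=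
    (evalo_comp numeral).trans (congrFun (hdbl O) n)
  have lookup : O (2 * (n + 1)) = Part.some (g n) := by
    simp [hO, pjoin, toPFun]
  rw [phi, he, evalo_comp place]
  exact lookup

end Models

section Necessity

variable {X Y Z : Set ℕ}

theorem EnumPred.graphApp {α : Type} [Primcodable α] {A : Set ℕ} {B : α → Set ℕ}
    (hA : EnumPred Y (· ∈ A)) (hB : EnumPred Y fun z : α × ℕ => z.2 ∈ B z.1) (p : ℕ) :
    EnumPred Y fun a => p ∈ graphApp A (B a) := by
  have pairs : Primrec fun z : α × ℕ => z.2.bitIndices.map fun k => (z.1, k) :=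
    Primrec.list_map (primrec_bitIndices.comp Primrec.snd)
      ((Primrec.fst.comp Primrec.fst).pair Primrec.snd).to₂
  refine .of_iff (.exists (P := fun a u => Nat.pair p u ∈ A ∧
    ∀ q ∈ u.bitIndices.map (a, ·), q.2 ∈ B q.1) (.and
      (hA.comp (Primrec₂.natPair.comp (Primrec.const p) Primrec.snd))
      (hB.forall_mem.comp pairs))) fun a => ?_
  simp [PCAEmb.graphApp, Du_subset_iff]

theorem enumPred_mem_of_succ {A : ℕ → Set ℕ} {S : Set ℕ} (h0 : EnumPred Y (· ∈ A 0))
    (hS : EnumPred Y (· ∈ S)) (hA : ∀ n, A (n + 1) = graphApp S (A n)) :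
    EnumPred Y fun z : ℕ × ℕ => z.2 ∈ A z.1 := by
  let Q (z : ℕ × ℕ) (l : List (ℕ × ℕ)) : Prop :=
    (z.1 = 0 ∧ z.2 ∈ A 0 ∧ l = []) ∨ ∃ u, z.1 ≠ 0 ∧ Nat.pair z.2 u ∈ S ∧
      l = u.bitIndices.map (z.1 - 1, ·)
  have hQ : EnumPred Y fun z : (ℕ × ℕ) × List (ℕ × ℕ) => Q z.1 z.2 := by
    refine .or (.and (.of_primrecPred ?_) (.and ?_ (.of_primrecPred ?_)))
      (.exists (.and (.of_primrecPred ?_) (.and ?_ (.of_primrecPred ?_))))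
    · exact Primrec.eq.comp (Primrec.fst.comp Primrec.fst) (Primrec.const 0)
    · exact h0.comp (Primrec.snd.comp Primrec.fst)
    · exact Primrec.eq.comp Primrec.snd (Primrec.const [])
    · exact (Primrec.eq.comp (Primrec.fst.comp (Primrec.fst.comp Primrec.fst))
        (Primrec.const 0)).not
    · exact hS.comp (Primrec₂.natPair.comp (Primrec.snd.comp (Primrec.fst.comp Primrec.fst))
        Primrec.snd)
    · exact Primrec.eq.comp (Primrec.snd.comp Primrec.fst)
        (Primrec.list_map (primrec_bitIndices.comp Primrec.snd)
          ((Primrec.pred.comp (Primrec.fst.comp (Primrec.fst.comp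
            (Primrec.fst.comp Primrec.fst)))).pair Primrec.snd).to₂)
  refine .of_recursion hQ Prod.fst ?_ ?_
  · rintro z l (⟨-, -, rfl⟩ | ⟨u, hz, -, rfl⟩)
    · simp
    · simp only [List.mem_map]
      rintro _ ⟨k, -, rfl⟩
      exact Nat.sub_one_lt hz
  · rintro ⟨_ | n, k⟩
    · simp [Q]
    · simp [Q, hA, PCAEmb.graphApp, Du_subset_iff, -Prod.forall]

variable {f : Bel X → Gel Y}

theorem IsPCAEmbedding.eq_graphApp (hf : IsPCAEmbedding (bXApp X) (gXApp Y) f) {a b c : Bel X}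
    (h : c ∈ bXApp X a b) : (f c).1 = graphApp (f a).1 (f b).1 :=
  mem_gXApp.1 (hf.2 a b c h)

theorem IsPCAEmbedding.enumPred_mem_cst (hf : IsPCAEmbedding (bXApp X) (gXApp Y) f) :
    EnumPred Y fun z : ℕ × ℕ => z.2 ∈ (f (cst X z.1)).1 := by
  obtain ⟨S, hS⟩ := exists_cst_mem_bXApp (X := X) (g := Nat.succ) ⟨.succ, rfl⟩
  exact enumPred_mem_of_succ (A := fun n => (f (cst X n)).1) (.of_enumLE (f _).2)
    (.of_enumLE (f S).2) fun n => hf.eq_graphApp (hS n)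

theorem IsPCAEmbedding.exists_mem_notMem (hf : IsPCAEmbedding (bXApp X) (gXApp Y) f) :
    ∃ a b p, p ∈ (f (cst X a)).1 ∧ p ∉ (f (cst X b)).1 := by
  by_contra! h
  exact zero_ne_one (cst_injective X (hf.1 (Subtype.ext (Set.Subset.antisymm (h 0 1) (h 1 0)))))

theorem IsPCAEmbedding.enumPred_of_turingLE (hf : IsPCAEmbedding (bXApp X) (gXApp Y) f)
    (hZ : TuringLE Z X) : EnumPred Y (· ∈ Z) := by
  classical
  obtain ⟨a, b, p, ha, hb⟩ := hf.exists_mem_notMem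
  have select : RecursiveIn (chi X) (toPFun fun n => if n ∈ Z then a else b) := by
    have eq_map : toPFun (fun n => if n ∈ Z then a else b) =
        fun n => (chi Z n).map fun i => if i = 1 then a else b := by
      funext n
      by_cases hn : n ∈ Z <;> simp [toPFun, chi, hn]
    rw [eq_map]
    exact recursiveIn_comp hZ (Primrec.ite (Primrec.eq.comp Primrec.id (Primrec.const 1))
      (Primrec.const a) (Primrec.const b)).to_comp
  obtain ⟨D, hD⟩ := exists_cst_mem_bXApp select
  refine .of_iff (.graphApp (B := fun n => (f (cst X n)).1) (.of_enumLE (f D).2)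
    hf.enumPred_mem_cst p) fun n => ?_
  rw [← hf.eq_graphApp (hD n)]
  split_ifs with hn <;> simp [hn, ha, hb]

theorem turingLE_refl (X : Set ℕ) : TuringLE X X :=
  ⟨.oracle, rfl⟩

theorem turingLE_compl (X : Set ℕ) : TuringLE Xᶜ X := by
  have eq_map : chi Xᶜ = fun n => (chi X n).map (1 - ·) := by
    funext n
    by_cases hn : n ∈ X <;> simp [chi, hn]
  rw [TuringLE, eq_map]
  exact recursiveIn_comp (turingLE_refl X)
    (Primrec.nat_sub.comp (Primrec.const 1) Primrec.id).to_comp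

end Necessity

theorem stmt18 (X Y : Set ℕ) :
    (∃ f : Bel X → Gel Y, IsPCAEmbedding (bXApp X) (gXApp Y) f) ↔
      EnumLE (joinCompl X) Y := by
  constructor
  · rintro ⟨f, hf⟩
    exact enumLE_joinCompl_iff.2 ⟨hf.enumPred_of_turingLE (turingLE_refl X),
      hf.enumPred_of_turingLE (turingLE_compl X)⟩
  · intro h
    obtain ⟨hX, hXc⟩ := enumLE_joinCompl_iff.1 h
    let f (θ : Bel X) : Gel Y := ⟨embed θ.1, (enumPred_mem_embed hX hXc θ.2).enumLE⟩
    refine ⟨f, fun θ ρ hθρ => Subtype.ext (embed_injective (congrArg Subtype.val hθρ)),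
      fun θ ρ c hc => mem_gXApp.2 ?_⟩
    change embed c.1 = graphApp (embed θ.1) (embed ρ.1)
    rw [mem_bXApp.1 hc, embed_seqApp]

end PCAEmb
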